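/- Let a > 0 and let z : ℝ³ → ℝ³ be continuously differentiable on a neighborhood of the sphere ∂B_a = {x ∈ ℝ³ : |x| = a}. Then ∫_{∂B_a} ( div z(x) − (∇z(x) ν(x)) · ν(x) ) dH²(x) = (2/a) ∫_{∂B_a} z(x) · ν(x) dH²(x), where ν(x) = x/a is the outward unit normal, div z = tr ∇z, and ∇z is the Jacobian matrix. -/

import Mathlib

open Matrix MeasureTheory

/-- The Jacobian matrix `(∇z)_{ij} = ∂z_i/∂x_j` of a map `z : ℝ³ → ℝ³`. -/
noncomputable def jacE (z : EuclideanSpace ℝ (Fin 3) → EuclideanSpace ℝ (Fin 3))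
    (x : EuclideanSpace ℝ (Fin 3)) : Matrix (Fin 3) (Fin 3) ℝ :=
  fun i j => fderiv ℝ z x (EuclideanSpace.single j 1) i

/-!
A finite measure on a sphere that is invariant under linear isometries annihilates the derivative
of every `C¹` function along the field `x ↦ A x` for skew-adjoint `A`: differentiate
`t ↦ ∫ f (exp (t A) x)`, which is constant. Take `A x = ⟪b j, x⟫ u - ⟪u, x⟫ b j` and
`f = ⟪b j, ·⟫ g`, where `b` is an orthonormal basis, and sum over `j`; the result is the integration
by parts formula `∫ Dg(x)(|x|² u - ⟪u, x⟫ x) = (dim E - 1) ∫ ⟪u, x⟫ g(x)`. Taking `u = b i`,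
`g = ⟪b i, z⟫` and summing over `i` turns the left side into `a² ∫ div_τ z`, and the right side into
`(dim E - 1) ∫ ⟪z(x), x⟫`.
-/

open Metric Module Set
open scoped RealInnerProductSpace ENNReal Pointwise
open InnerProductSpace (rankOne)

section HausdorffMeasure

theorem hausdorffMeasure_image_lt_top_of_contDiff {F G : Type*}
    [NormedAddCommGroup F] [NormedSpace ℝ F] [FiniteDimensional ℝ F] [MeasurableSpace F]
    [BorelSpace F] [NormedAddCommGroup G] [NormedSpace ℝ G] [MeasurableSpace G] [BorelSpace G]
    {f : F → G} (hf : ContDiff ℝ 1 f) {K : Set F} (hK : IsCompact K) :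
    μH[finrank ℝ F] (f '' K) < ∞ := by
  obtain ⟨C, hC⟩ := hf.locallyLipschitz.locallyLipschitzOn.exists_lipschitzOnWith_of_compact hK
  exact (hC.hausdorffMeasure_image_le (by positivity)).trans_lt
    (ENNReal.mul_lt_top (by simp) hK.measure_lt_top)

variable {E : Type*} [NormedAddCommGroup E] [InnerProductSpace ℝ E]

theorem mem_stereoInvFunAux_image_closedBall {v x : E} (hv : ‖v‖ = 1) (hx : ‖x‖ = 1)
    (hvx : ⟪v, x⟫ ≤ 0) :
    x ∈ (fun w : (ℝ ∙ v)ᗮ => stereoInvFunAux v w) '' closedBall 0 2 := by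
  have hne : x ≠ v := by
    rintro rfl
    rw [real_inner_self_eq_norm_sq, hv] at hvx
    norm_num at hvx
  refine ⟨stereoToFun v x, ?_, congr_arg Subtype.val
    (stereo_left_inv hv (x := ⟨x, mem_sphere_zero_iff_norm.2 hx⟩) hne)⟩
  have hproj : ‖(ℝ ∙ v)ᗮ.orthogonalProjectionOnto x‖ ≤ 1 :=
    ((ℝ ∙ v)ᗮ.norm_orthogonalProjectionOnto_apply_le x).trans_eq hx
  have hscale : ‖2 / (1 - ⟪v, x⟫)‖ ≤ 2 := by
    rw [norm_div, Real.norm_two, Real.norm_of_nonneg (by linarith)]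
    exact div_le_self zero_le_two (by linarith)
  rw [mem_closedBall_zero_iff, stereoToFun_apply, innerSL_apply_apply, norm_smul]
  exact (mul_le_mul hscale hproj (norm_nonneg _) zero_le_two).trans_eq (mul_one 2)

variable [MeasurableSpace E] [BorelSpace E] {n : ℕ}

-- Stereographic projection from `v` maps the hemisphere opposite to `v` into a bounded set, so two
-- opposite projections exhibit the sphere as a union of two smooth images of compact balls.
theorem hausdorffMeasure_unitSphere_lt_top (hn : finrank ℝ E = n + 1) :
    μH[n] (sphere (0 : E) 1) < ∞ := by
  have : Fact (finrank ℝ E = n + 1) := ⟨hn⟩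
  have : FiniteDimensional ℝ E := .of_finrank_eq_succ hn
  have : Nontrivial E := nontrivial_of_finrank_eq_succ hn
  obtain ⟨v, hv⟩ := exists_norm_eq E zero_le_one
  let cap (u : E) : Set E := (fun w : (ℝ ∙ u)ᗮ => stereoInvFunAux u w) '' closedBall 0 2
  have cap_lt_top {u : E} (hu : ‖u‖ = 1) : μH[n] (cap u) < ∞ := by
    have hu0 : u ≠ 0 := norm_ne_zero_iff.1 (hu.trans_ne one_ne_zero)
    have hdim : finrank ℝ (ℝ ∙ u)ᗮ = n := Submodule.finrank_orthogonal_span_singleton hu0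
    rw [← hdim]
    exact hausdorffMeasure_image_lt_top_of_contDiff
      (contDiff_stereoInvFunAux.comp (ℝ ∙ u)ᗮ.subtypeL.contDiff) (isCompact_closedBall _ _)
  have hcover : sphere (0 : E) 1 ⊆ cap v ∪ cap (-v) := by
    intro x hx
    rw [mem_sphere_zero_iff_norm] at hx
    rcases le_total ⟪v, x⟫ 0 with h | h
    · exact .inl (mem_stereoInvFunAux_image_closedBall hv hx h)
    · refine .inr (mem_stereoInvFunAux_image_closedBall (by rwa [norm_neg]) hx ?_)
      rwa [inner_neg_left, neg_nonpos]
  exact measure_lt_top_mono hcover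
    (measure_union_lt_top (cap_lt_top hv) (cap_lt_top (by rwa [norm_neg])))

theorem hausdorffMeasure_sphere_lt_top (hn : finrank ℝ E = n + 1) (c : E) {r : ℝ} (hr : 0 < r) :
    μH[n] (sphere c r) < ∞ := by
  have hsphere : sphere c r = c +ᵥ r • sphere (0 : E) 1 := by
    rw [smul_sphere' hr.ne', vadd_sphere, smul_zero, vadd_eq_add, add_zero, mul_one,
      Real.norm_of_nonneg hr.le]
  rw [hsphere, hausdorffMeasure_vadd _ (.inl n.cast_nonneg),
    Measure.hausdorffMeasure_smul₀ n.cast_nonneg hr.ne']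
  exact ENNReal.mul_lt_top (by simp) (hausdorffMeasure_unitSphere_lt_top hn)

end HausdorffMeasure

theorem integral_eq_zero_of_hasDerivAt_flow {X F : Type*} [MeasurableSpace X] {σ : Measure X}
    [IsFiniteMeasure σ] [NormedAddCommGroup F] [NormedSpace ℝ F] {φ : ℝ → X → X}
    (hφ : ∀ t, MeasurePreserving (φ t) σ σ) {f f' : X → F} (hf : Integrable f σ)
    (hf' : AEStronglyMeasurable f' σ) {C : ℝ} (hC : ∀ᵐ x ∂σ, ∀ t, ‖f' (φ t x)‖ ≤ C)
    (hderiv : ∀ᵐ x ∂σ, ∀ t, HasDerivAt (fun s => f (φ s x)) (f' (φ t x)) t) :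
    ∫ x, f' x ∂σ = 0 := by
  have integral_flow {g : X → F} (hg : AEStronglyMeasurable g σ) (t : ℝ) :
      ∫ x, g (φ t x) ∂σ = ∫ x, g x ∂σ := by
    rw [← integral_map (hφ t).aemeasurable (by rwa [(hφ t).map_eq]), (hφ t).map_eq]
  have key := (hasDerivAt_integral_of_dominated_loc_of_deriv_le (x₀ := (0 : ℝ)) Filter.univ_mem
    (.of_forall fun t => hf.1.comp_measurePreserving (hφ t))
    ((hφ 0).integrable_comp_of_integrable hf)
    (hf'.comp_measurePreserving (hφ 0)) (hC.mono fun x hx t _ => hx t)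
    (integrable_const C) (hderiv.mono fun x hx t _ => hx t)).2
  simp only [Function.comp_def, integral_flow hf.1] at key
  rw [← integral_flow hf' 0]
  exact key.unique (hasDerivAt_const _ _)

section RotationFlow

variable {E : Type*} [NormedAddCommGroup E] [InnerProductSpace ℝ E] [CompleteSpace E]

/-- The one-parameter group `t ↦ exp (t A)` of linear isometries generated by a skew-adjoint
operator `A`. -/
noncomputable def rotationFlow (A : skewAdjoint (E →L[ℝ] E)) (t : ℝ) : E ≃ₗᵢ[ℝ] E :=
  Unitary.linearIsometryEquiv ⟨NormedSpace.exp (t • (A : E →L[ℝ] E)),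
    letI : NormedAlgebra ℚ (E →L[ℝ] E) := .restrictScalars ℚ ℝ _
    NormedSpace.exp_mem_unitary_of_mem_skewAdjoint (skewAdjoint.smul_mem t A.2)⟩

theorem hasDerivAt_rotationFlow (A : skewAdjoint (E →L[ℝ] E)) (t : ℝ) (x : E) :
    HasDerivAt (fun s => rotationFlow A s x) ((A : E →L[ℝ] E) (rotationFlow A t x)) t :=
  (ContinuousLinearMap.apply ℝ E x).hasFDerivAt.comp_hasDerivAt t
    (hasDerivAt_exp_smul_const' (A : E →L[ℝ] E) t)

/-- The skew-adjoint operator `x ↦ ⟪v, x⟫ u - ⟪u, x⟫ v`, which generates the rotations in the plane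
spanned by `u` and `v` when these are orthonormal. -/
noncomputable def rotationGenerator (u v : E) : skewAdjoint (E →L[ℝ] E) :=
  ⟨rankOne ℝ u v - rankOne ℝ v u, by
    simp [skewAdjoint.mem_iff, ContinuousLinearMap.star_eq_adjoint]⟩

theorem rotationGenerator_apply (u v x : E) :
    (rotationGenerator u v : E →L[ℝ] E) x = ⟪v, x⟫ • u - ⟪u, x⟫ • v := rfl

end RotationFlow

theorem continuousOn_fderiv_clm_apply {E F : Type*} [NormedAddCommGroup E] [NormedSpace ℝ E]
    [NormedAddCommGroup F] [NormedSpace ℝ F] {s : Set E} {g : E → F}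
    (hg : ∀ x ∈ s, ContDiffAt ℝ 1 g x) {V : E → E} (hV : Continuous V) :
    ContinuousOn (fun x => fderiv ℝ g x (V x)) s :=
  fun x hx => (((hg x hx).continuousAt_fderiv one_ne_zero).clm_apply
    hV.continuousAt).continuousWithinAt

section Calculus

variable {E ι : Type*} [NormedAddCommGroup E] [InnerProductSpace ℝ E] [Fintype ι]

theorem sum_inner_mul_inner_comm (b : OrthonormalBasis ι ℝ E) (x y : E) :
    ∑ i, ⟪b i, x⟫ * ⟪b i, y⟫ = ⟪y, x⟫ := by
  rw [← b.sum_inner_mul_inner]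
  simp only [real_inner_comm, mul_comm]

/-- The tangential divergence `div_τ z = div z - (∇z ν) · ν` at `x` along the hyperplane with unit
normal `ν`; `div z` is the trace of the derivative, with value `0` when
`E` is infinite-dimensional. -/
noncomputable def tangentialDiv (z : E → E) (ν x : E) : ℝ :=
  LinearMap.trace ℝ E (fderiv ℝ z x) - ⟪fderiv ℝ z x ν, ν⟫

theorem sum_fderiv_inner_eq_tangentialDiv (b : OrthonormalBasis ι ℝ E) {z : E → E} {x : E}
    (hz : DifferentiableAt ℝ z x) :
    ∑ i, fderiv ℝ (fun y => ⟪b i, z y⟫) x (‖x‖ ^ 2 • b i - ⟪b i, x⟫ • x) =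
      ‖x‖ ^ 2 * tangentialDiv z (‖x‖⁻¹ • x) x := by
  rcases eq_or_ne x 0 with rfl | hx
  · simp
  have hcoord (i : ι) (w : E) : fderiv ℝ (fun y => ⟪b i, z y⟫) x w = ⟪b i, fderiv ℝ z x w⟫ := by
    rw [fderiv_inner_apply ℝ (differentiableAt_const _) hz]
    simp
  have hx' : ‖x‖ ≠ 0 := norm_ne_zero_iff.2 hx
  simp only [hcoord, map_sub, map_smul, inner_sub_right, inner_smul_right, Finset.sum_sub_distrib,
    ← Finset.mul_sum, sum_inner_mul_inner_comm]
  rw [tangentialDiv, LinearMap.trace_eq_sum_inner _ b, map_smul, real_inner_smul_left,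
    real_inner_smul_right]
  simp only [ContinuousLinearMap.coe_coe]
  field_simp

theorem sum_fderiv_inner_smul_rotationGenerator [FiniteDimensional ℝ E] {F : Type*}
    [NormedAddCommGroup F] [NormedSpace ℝ F] (b : OrthonormalBasis ι ℝ E) {g : E → F} {x : E}
    (hg : DifferentiableAt ℝ g x) (u : E) :
    ∑ j, fderiv ℝ (fun y => ⟪b j, y⟫ • g y) x ((rotationGenerator u (b j) : E →L[ℝ] E) x) =
      fderiv ℝ g x (‖x‖ ^ 2 • u - ⟪u, x⟫ • x) - (finrank ℝ E - 1 : ℝ) • ⟪u, x⟫ • g x := by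
  have hprod (j : ι) :
      fderiv ℝ (fun y => ⟪b j, y⟫ • g y) x ((rotationGenerator u (b j) : E →L[ℝ] E) x) =
        fderiv ℝ g x (⟪b j, x⟫ • (⟪b j, x⟫ • u - ⟪u, x⟫ • b j)) +
          (⟪u, b j⟫ * ⟪b j, x⟫ - ⟪u, x⟫) • g x := by
    have hinner : HasFDerivAt (fun y => ⟪b j, y⟫) (innerSL ℝ (b j)) x :=
      (innerSL ℝ (b j)).hasFDerivAt
    rw [(hinner.fun_smul hg.hasFDerivAt).fderiv]
    simp [rotationGenerator_apply, inner_sub_right, inner_smul_right, real_inner_comm, mul_comm]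
  have hnorm : ∑ j, ⟪b j, x⟫ ^ 2 = ‖x‖ ^ 2 := by
    simp only [sq, sum_inner_mul_inner_comm, real_inner_self_eq_norm_mul_norm]
  have hvec : ∑ j, ⟪b j, x⟫ • (⟪b j, x⟫ • u - ⟪u, x⟫ • b j) = ‖x‖ ^ 2 • u - ⟪u, x⟫ • x := by
    simp only [smul_sub, smul_smul, Finset.sum_sub_distrib, ← Finset.sum_smul, ← sq, hnorm]
    simp only [mul_comm _ ⟪u, x⟫, mul_smul, ← Finset.smul_sum, b.sum_repr']
  have hscal : ∑ j, (⟪u, b j⟫ * ⟪b j, x⟫ - ⟪u, x⟫) = -((finrank ℝ E - 1 : ℝ) * ⟪u, x⟫) := by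
    rw [Finset.sum_sub_distrib, b.sum_inner_mul_inner, Finset.sum_const, Finset.card_univ,
      ← finrank_eq_card_basis b.toBasis, nsmul_eq_mul]
    ring
  rw [Finset.sum_congr rfl fun j _ => hprod j, Finset.sum_add_distrib, ← map_sum, hvec,
    ← Finset.sum_smul, hscal, neg_smul, mul_smul, ← sub_eq_add_neg]

end Calculus

theorem integrableOn_sphere_of_continuousOn {X F : Type*} [PseudoMetricSpace X] [ProperSpace X]
    [MeasurableSpace X] [OpensMeasurableSpace X] [NormedAddCommGroup F] {μ : Measure X} {c : X}
    {r : ℝ} (hfin : μ (sphere c r) ≠ ∞) {g : X → F} (hg : ContinuousOn g (sphere c r)) :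
    IntegrableOn g (sphere c r) μ :=
  hg.integrableOn_of_subset_isCompact (isCompact_sphere _ _) isClosed_sphere.measurableSet
    Subset.rfl hfin

section InvariantMeasure

variable {E F : Type*} [NormedAddCommGroup E] [InnerProductSpace ℝ E] [FiniteDimensional ℝ E]
  [MeasurableSpace E] [BorelSpace E] [NormedAddCommGroup F] [NormedSpace ℝ F]
  {μ : Measure E} {a : ℝ} (hμ : ∀ R : E ≃ₗᵢ[ℝ] E, MeasurePreserving R μ μ)
  (hfin : μ (sphere 0 a) ≠ ∞)

include hμ hfin

theorem setIntegral_sphere_fderiv_skewAdjoint_eq_zero {f : E → F}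
    (hf : ∀ x ∈ sphere 0 a, ContDiffAt ℝ 1 f x) (A : skewAdjoint (E →L[ℝ] E)) :
    ∫ x in sphere 0 a, fderiv ℝ f x ((A : E →L[ℝ] E) x) ∂μ = 0 := by
  have hS : MeasurableSet (sphere (0 : E) a) := isClosed_sphere.measurableSet
  have : IsFiniteMeasure (μ.restrict (sphere 0 a)) := ⟨by simpa using hfin.lt_top⟩
  have hcont := continuousOn_fderiv_clm_apply hf (A : E →L[ℝ] E).continuous
  obtain ⟨C, hC⟩ := (isCompact_sphere _ _).exists_bound_of_continuousOn hcont
  have hflow (t : ℝ) {x : E} (hx : x ∈ sphere 0 a) : rotationFlow A t x ∈ sphere 0 a := by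
    simpa using hx
  refine integral_eq_zero_of_hasDerivAt_flow (φ := fun t => rotationFlow A t) (f := f)
    (fun t => ?_) ?_ ?_ (C := C) ?_ ?_
  · simpa using (hμ (rotationFlow A t)).restrict_preimage hS
  · exact integrableOn_sphere_of_continuousOn hfin
      fun x hx => (hf x hx).continuousAt.continuousWithinAt
  · exact hcont.aestronglyMeasurable hS
  · exact (ae_restrict_mem hS).mono fun x hx t => hC _ (hflow t hx)
  · exact (ae_restrict_mem hS).mono fun x hx t =>
      ((hf _ (hflow t hx)).differentiableAt one_ne_zero).hasFDerivAt.comp_hasDerivAt t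
        (hasDerivAt_rotationFlow A t x)

theorem setIntegral_sphere_fderiv_tangential {g : E → F}
    (hg : ∀ x ∈ sphere 0 a, ContDiffAt ℝ 1 g x) (u : E) :
    ∫ x in sphere 0 a, fderiv ℝ g x (‖x‖ ^ 2 • u - ⟪u, x⟫ • x) ∂μ =
      (finrank ℝ E - 1 : ℝ) • ∫ x in sphere 0 a, ⟪u, x⟫ • g x ∂μ := by
  let b := stdOrthonormalBasis ℝ E
  have hbg (j) : ∀ x ∈ sphere 0 a, ContDiffAt ℝ 1 (fun y => ⟪b j, y⟫ • g y) x :=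
    fun x hx => (innerSL ℝ (b j)).contDiff.contDiffAt.smul (hg x hx)
  have hsum : ∫ x in sphere 0 a, (fderiv ℝ g x (‖x‖ ^ 2 • u - ⟪u, x⟫ • x) -
      (finrank ℝ E - 1 : ℝ) • ⟪u, x⟫ • g x) ∂μ = 0 := by
    rw [setIntegral_congr_fun isClosed_sphere.measurableSet fun x hx =>
      (sum_fderiv_inner_smul_rotationGenerator b ((hg x hx).differentiableAt one_ne_zero) u).symm,
      integral_finsetSum _ fun j _ => integrableOn_sphere_of_continuousOn hfin
        (continuousOn_fderiv_clm_apply (hbg j) (ContinuousLinearMap.continuous _))]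
    exact Finset.sum_eq_zero fun j _ =>
      setIntegral_sphere_fderiv_skewAdjoint_eq_zero hμ hfin (hbg j) _
  have hint : IntegrableOn (fun x => ⟪u, x⟫ • g x) (sphere 0 a) μ :=
    integrableOn_sphere_of_continuousOn hfin fun x hx =>
      ((innerSL ℝ u).continuous.continuousAt.smul (hg x hx).continuousAt).continuousWithinAt
  rw [integral_sub (integrableOn_sphere_of_continuousOn hfin
    (continuousOn_fderiv_clm_apply hg (by fun_prop))) (hint.fun_smul _), sub_eq_zero,
    integral_smul] at hsum
  exact hsum

theorem setIntegral_sphere_tangentialDiv (ha : 0 < a) {z : E → E}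
    (hz : ∀ x ∈ sphere 0 a, ContDiffAt ℝ 1 z x) :
    ∫ x in sphere 0 a, tangentialDiv z (a⁻¹ • x) x ∂μ =
      (finrank ℝ E - 1 : ℝ) / a * ∫ x in sphere 0 a, ⟪z x, a⁻¹ • x⟫ ∂μ := by
  let b := stdOrthonormalBasis ℝ E
  have hbz (i) : ∀ x ∈ sphere 0 a, ContDiffAt ℝ 1 (fun y => ⟪b i, z y⟫) x :=
    fun x hx => contDiffAt_const.inner ℝ (hz x hx)
  have key := calc
    a ^ 2 * ∫ x in sphere 0 a, tangentialDiv z (a⁻¹ • x) x ∂μ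
    _ = ∫ x in sphere 0 a,
          ∑ i, fderiv ℝ (fun y => ⟪b i, z y⟫) x (‖x‖ ^ 2 • b i - ⟪b i, x⟫ • x) ∂μ := by
      rw [← integral_const_mul]
      exact setIntegral_congr_fun isClosed_sphere.measurableSet fun x hx => by
        rw [sum_fderiv_inner_eq_tangentialDiv b ((hz x hx).differentiableAt one_ne_zero),
          mem_sphere_zero_iff_norm.1 hx]
    _ = ∑ i, (finrank ℝ E - 1 : ℝ) * ∫ x in sphere 0 a, ⟪b i, x⟫ * ⟪b i, z x⟫ ∂μ := by
      rw [integral_finsetSum _ fun i _ => integrableOn_sphere_of_continuousOn hfin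
        (continuousOn_fderiv_clm_apply (hbz i) (by fun_prop))]
      exact Finset.sum_congr rfl fun i _ =>
        setIntegral_sphere_fderiv_tangential hμ hfin (hbz i) (b i)
    _ = (finrank ℝ E - 1) * ∫ x in sphere 0 a, ⟪z x, x⟫ ∂μ := by
      have hint (i) : IntegrableOn (fun x => ⟪b i, x⟫ * ⟪b i, z x⟫) (sphere 0 a) μ :=
        integrableOn_sphere_of_continuousOn hfin fun x hx =>
          ((innerSL ℝ (b i)).continuous.continuousAt.mul
            (hbz i x hx).continuousAt).continuousWithinAt
      rw [← Finset.mul_sum, ← integral_finsetSum _ fun i _ => hint i]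
      simp only [sum_inner_mul_inner_comm]
  simp only [inner_smul_right, integral_const_mul]
  rw [← mul_right_inj' (pow_ne_zero 2 ha.ne'), key]
  field_simp

end InvariantMeasure

theorem surface_divergence_theorem_sphere_general {E : Type*} [NormedAddCommGroup E]
    [InnerProductSpace ℝ E] [MeasurableSpace E] [BorelSpace E] {n : ℕ}
    (hn : finrank ℝ E = n + 1) {a : ℝ} (ha : 0 < a) {z : E → E}
    (hz : ∀ x ∈ sphere 0 a, ContDiffAt ℝ 1 z x) :
    ∫ x in sphere 0 a, tangentialDiv z (a⁻¹ • x) x ∂μH[n] =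
      n / a * ∫ x in sphere 0 a, ⟪z x, a⁻¹ • x⟫ ∂μH[n] := by
  have : FiniteDimensional ℝ E := .of_finrank_eq_succ hn
  have h := setIntegral_sphere_tangentialDiv
    (fun R => R.toIsometryEquiv.measurePreserving_hausdorffMeasure n)
    (hausdorffMeasure_sphere_lt_top hn 0 ha).ne ha hz
  rwa [hn, Nat.cast_succ, add_sub_cancel_right] at h

section Coordinates

variable (z : EuclideanSpace ℝ (Fin 3) → EuclideanSpace ℝ (Fin 3)) (x : EuclideanSpace ℝ (Fin 3))

theorem jacE_mulVec (v : EuclideanSpace ℝ (Fin 3)) : jacE z x *ᵥ v = fderiv ℝ z x v := by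
  ext i
  conv_rhs => rw [← (EuclideanSpace.basisFun (Fin 3) ℝ).sum_repr v, map_sum]
  simp [jacE, mulVec, dotProduct, mul_comm]

theorem trace_jacE : (jacE z x).trace = LinearMap.trace ℝ _ (fderiv ℝ z x).toLinearMap := by
  rw [LinearMap.trace_eq_sum_inner _ (EuclideanSpace.basisFun (Fin 3) ℝ)]
  simp [jacE, trace, EuclideanSpace.inner_single_left]

theorem trace_jacE_sub_eq_tangentialDiv (ν : EuclideanSpace ℝ (Fin 3)) :
    (jacE z x).trace - (jacE z x *ᵥ ν) ⬝ᵥ ν = tangentialDiv z ν x := by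
  rw [trace_jacE, jacE_mulVec, tangentialDiv, EuclideanSpace.inner_eq_star_dotProduct,
    star_trivial, dotProduct_comm]

end Coordinates

/-- Surface divergence theorem on the sphere `∂B_a`:
`∫_{∂B_a} div_τ z dH² = (2/a) ∫_{∂B_a} z·ν dH²`, where
`div_τ z = div z − (∇z ν)·ν` and `ν(x) = x/a`. -/
theorem surface_divergence_theorem_sphere
    (a : ℝ) (ha : 0 < a)
    (U : Set (EuclideanSpace ℝ (Fin 3))) (hU : IsOpen U)
    (hsub : Metric.sphere (0 : EuclideanSpace ℝ (Fin 3)) a ⊆ U)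
    (z : EuclideanSpace ℝ (Fin 3) → EuclideanSpace ℝ (Fin 3))
    (hz : ContDiffOn ℝ 1 z U) :
    ∫ x in Metric.sphere (0 : EuclideanSpace ℝ (Fin 3)) a,
        (Matrix.trace (jacE z x)
          - ((jacE z x).mulVec (fun j => x j / a)) ⬝ᵥ (fun j => x j / a)) ∂(μH[2])
      = 2/a * ∫ x in Metric.sphere (0 : EuclideanSpace ℝ (Fin 3)) a,
          ((fun i => z x i) ⬝ᵥ (fun j => x j / a)) ∂(μH[2]) := by
  have hν (x : EuclideanSpace ℝ (Fin 3)) : (fun j => x j / a) = ⇑(a⁻¹ • x) := by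
    ext j
    exact div_eq_inv_mul _ _
  have hdot (x y : EuclideanSpace ℝ (Fin 3)) : (fun i => x i) ⬝ᵥ ⇑y = ⟪x, y⟫ := by
    rw [EuclideanSpace.inner_eq_star_dotProduct, star_trivial, dotProduct_comm]
  simp only [hν, hdot, trace_jacE_sub_eq_tangentialDiv]
  exact surface_divergence_theorem_sphere_general (n := 2) finrank_euclideanSpace_fin ha
    fun x hx => hz.contDiffAt (hU.mem_nhds (hsub hx))
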